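/- Under the stated setup and assumptions, for every p ∈ [1,∞] the low-rank approximation error satisfies ‖(I − QQ*)A‖_p ≤ ‖Σ_⊥‖_p + γ_k^{2q}·‖Σ_⊥Ω_2Ω_1†‖_p in the Schatten-p norm. -/

import Mathlib

open scoped ENNReal
open Matrix

/-- The `j`-th largest singular value (0-indexed) of a complex matrix,
obtained as the decreasingly sorted square roots of the eigenvalues of `Mᴴ * M`. -/
noncomputable def sval {m n : ℕ} (M : Matrix (Fin m) (Fin n) ℂ) (j : ℕ) : ℝ :=
  (List.insertionSort (· ≥ ·)
    ((List.ofFn (Matrix.isHermitian_conjTranspose_mul_self M).eigenvalues).map Real.sqrt)).getD j 0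

/-- The Schatten-`p` norm (`p = ∞` gives the spectral norm). -/
noncomputable def schatten {m n : ℕ} (p : ℝ≥0∞) (M : Matrix (Fin m) (Fin n) ℂ) : ℝ :=
  if p = ⊤ then sval M 0
  else (∑ j ∈ Finset.range n, sval M j ^ p.toReal) ^ (1 / p.toReal)

/-- Moore–Penrose pseudoinverse of a full-row-rank matrix. -/
noncomputable def rpinv {a b : ℕ} (M : Matrix (Fin a) (Fin b) ℂ) : Matrix (Fin b) (Fin a) ℂ :=
  Mᴴ * (M * Mᴴ)⁻¹

/-- Rectangular diagonal matrix with entries `σ (off), σ (off+1), …` on the diagonal. -/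
noncomputable def diagRect (σ : ℕ → ℝ) (off a b : ℕ) : Matrix (Fin a) (Fin b) ℂ :=
  Matrix.of fun i j => if (i : ℕ) = (j : ℕ) then (σ (off + (i : ℕ)) : ℂ) else 0

/-- The first `b` columns of a matrix with `b + c` columns. -/
def colsL {a b c : ℕ} (M : Matrix (Fin a) (Fin (b + c)) ℂ) : Matrix (Fin a) (Fin b) ℂ :=
  M.submatrix id (Fin.castAdd c)

/-- The last `c` columns of a matrix with `b + c` columns. -/
def colsR {a b c : ℕ} (M : Matrix (Fin a) (Fin (b + c)) ℂ) : Matrix (Fin a) (Fin c) ℂ :=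
  M.submatrix id (Fin.natAdd b)

/-!
Put `P = 1 - Q * Qᴴ`, `Y = (A * Aᴴ) ^ q * A * Ω` and write `A = U₁ * L * V₁ᴴ + U₂ * S * V₂ᴴ` with
`L = Σ_k` and `S = Σ_⊥`. The contraction `P` annihilates `Y`, hence also
`Y * Ω₁† * L⁻¹ ^ (2 * q) = U₁ * L + U₂ * (S * Sᴴ) ^ q * S * Ω₂ * Ω₁† * L⁻¹ ^ (2 * q)`. So `P * A`
equals `P * U₂ * S * V₂ᴴ` minus a product that has `S * Ω₂ * Ω₁†` between two factors of operator
norm at most `σ_{k+1} ^ (2 * q)` and `σ_k ^ (-2 * q)`, and one concludes by the triangle inequality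
and the ideal property of the Schatten norm.

These two properties follow from `‖diag (C * M * D)‖_p ≤ ‖C‖ * ‖D‖ * ‖M‖_p`, in which equality is
attained by contractions `C` and `D` taken from a singular value decomposition of `M`. With
`M = W * diag s * Zᴴ`, the diagonal of `C * M * D` is the image of `s` under the Hadamard product of
`C * W` and `(Zᴴ * D)ᵀ`, whose absolute row and column sums are at most `‖C‖ * ‖D‖` by
Cauchy–Schwarz, so that the inequality is an instance of the Schur test on `ℓ^p`.
-/

section SortedList

variable {α β : Type*} [LinearOrder α]

lemma isGreatest_getD_zero_insertionSort {l : List α} (hl : l ≠ []) (d : α) :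
    IsGreatest {x | x ∈ l} ((l.insertionSort (· ≥ ·)).getD 0 d) := by
  have hmem (x : α) : x ∈ l.insertionSort (· ≥ ·) ↔ x ∈ l := List.mem_insertionSort _
  have hsorted := List.pairwise_insertionSort (· ≥ ·) l
  cases h : l.insertionSort (· ≥ ·) with
  | nil => simp [← List.length_eq_zero_iff, ← l.length_insertionSort (· ≥ ·), h] at hl
  | cons a t =>
    rw [h] at hmem hsorted
    refine ⟨(hmem a).1 List.mem_cons_self, fun x hx => ?_⟩
    rcases List.mem_cons.1 ((hmem x).2 hx) with rfl | hxt
    · exact le_rfl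
    · exact List.rel_of_pairwise_cons hsorted hxt

lemma sum_range_getD_insertionSort [AddCommMonoid β] (l : List α) (d : α) (f : α → β) :
    ∑ j ∈ Finset.range l.length, f ((l.insertionSort (· ≥ ·)).getD j d) = (l.map f).sum := by
  rw [← ((l.perm_insertionSort (· ≥ ·)).map f).sum_eq, ← l.length_insertionSort (· ≥ ·),
    Finset.sum_range, ← Fin.sum_univ_fun_getElem]
  simp only [Fin.is_lt, List.getD_eq_getElem]

end SortedList

section LpNorm

variable {ι κ : Type*} [Fintype ι] [Fintype κ] {p : ℝ≥0∞} [hp : Fact (1 ≤ p)]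

lemma norm_toLp_congr {E F : Type*} [SeminormedAddCommGroup E] [SeminormedAddCommGroup F]
    {v : ι → E} {w : ι → F} (h : ∀ i, ‖v i‖ = ‖w i‖) :
    ‖WithLp.toLp p v‖ = ‖WithLp.toLp p w‖ := by
  rcases p.dichotomy with rfl | hp'
  · simp [PiLp.norm_eq_ciSup, h]
  · simp [PiLp.norm_eq_sum (zero_lt_one.trans_le hp'), h]

lemma rpow_sum_mul_le {r c : ℝ} (hr : 1 ≤ r) {w f : ι → ℝ} (hw : ∀ i, 0 ≤ w i)
    (hf : ∀ i, 0 ≤ f i) (hwc : ∑ i, w i ≤ c) :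
    (∑ i, w i * f i) ^ r ≤ c ^ (r - 1) * ∑ i, w i * f i ^ r := by
  have hr₀ : r ≠ 0 := by positivity
  have hW : 0 ≤ ∑ i, w i := Finset.sum_nonneg fun i _ => hw i
  have hS : 0 ≤ ∑ i, w i * f i ^ r :=
    Finset.sum_nonneg fun i _ => mul_nonneg (hw i) (Real.rpow_nonneg (hf i) r)
  calc (∑ i, w i * f i) ^ r
      ≤ ((∑ i, w i) ^ (1 - r⁻¹) * (∑ i, w i * f i ^ r) ^ r⁻¹) ^ r := by
        refine Real.rpow_le_rpow ?_ ?_ (by positivity)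
        · exact Finset.sum_nonneg fun i _ => mul_nonneg (hw i) (hf i)
        · exact Real.inner_le_weight_mul_Lp_of_nonneg _ hr _ _ hw hf
    _ = (∑ i, w i) ^ (r - 1) * ∑ i, w i * f i ^ r := by
        rw [Real.mul_rpow (by positivity) (by positivity), ← Real.rpow_mul hW,
          Real.rpow_inv_rpow hS hr₀, sub_mul, inv_mul_cancel₀ hr₀, one_mul]
    _ ≤ c ^ (r - 1) * ∑ i, w i * f i ^ r := by
        gcongr

variable {R : Type*} [NonUnitalSeminormedRing R] {M : Matrix ι κ R} {c : ℝ}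

omit [Fintype ι] in
lemma norm_mulVec_apply_le (M : Matrix ι κ R) (v : κ → R) (i : ι) :
    ‖(M *ᵥ v) i‖ ≤ ∑ j, ‖M i j‖ * ‖v j‖ :=
  norm_sum_le_of_le _ fun _ _ => norm_mul_le _ _

lemma sum_norm_mulVec_rpow_le {r : ℝ} (hr : 1 ≤ r) (hc : 0 ≤ c) (hrow : ∀ i, ∑ j, ‖M i j‖ ≤ c)
    (hcol : ∀ j, ∑ i, ‖M i j‖ ≤ c) (v : κ → R) :
    ∑ i, ‖(M *ᵥ v) i‖ ^ r ≤ c ^ r * ∑ j, ‖v j‖ ^ r :=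
  calc ∑ i, ‖(M *ᵥ v) i‖ ^ r
      ≤ ∑ i, (∑ j, ‖M i j‖ * ‖v j‖) ^ r := by
        gcongr with i
        exact norm_mulVec_apply_le M v i
    _ ≤ ∑ i, c ^ (r - 1) * ∑ j, ‖M i j‖ * ‖v j‖ ^ r :=
        Finset.sum_le_sum fun i _ =>
          rpow_sum_mul_le hr (fun _ => norm_nonneg _) (fun _ => norm_nonneg _) (hrow i)
    _ = c ^ (r - 1) * ∑ j, (∑ i, ‖M i j‖) * ‖v j‖ ^ r := by
        rw [← Finset.mul_sum, Finset.sum_comm]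
        simp only [Finset.sum_mul]
    _ ≤ c ^ (r - 1) * ∑ j, c * ‖v j‖ ^ r := by
        gcongr with j
        exact hcol j
    _ = c ^ r * ∑ j, ‖v j‖ ^ r := by
        rw [← Finset.mul_sum, ← mul_assoc, ← Real.rpow_add_one' hc (by linarith), sub_add_cancel]

/-- **Schur test** for the `ℓ^p` norm. -/
lemma norm_toLp_mulVec_le (hc : 0 ≤ c) (hrow : ∀ i, ∑ j, ‖M i j‖ ≤ c)
    (hcol : ∀ j, ∑ i, ‖M i j‖ ≤ c) (v : κ → R) :
    ‖WithLp.toLp p (M *ᵥ v)‖ ≤ c * ‖WithLp.toLp p v‖ := by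
  rcases p.dichotomy with rfl | hr
  · rw [PiLp.norm_toLp, PiLp.norm_toLp, pi_norm_le_iff_of_nonneg (by positivity)]
    intro i
    calc ‖(M *ᵥ v) i‖ ≤ ∑ j, ‖M i j‖ * ‖v j‖ := norm_mulVec_apply_le M v i
      _ ≤ ∑ j, ‖M i j‖ * ‖v‖ := by gcongr with j; exact norm_le_pi_norm v j
      _ ≤ c * ‖v‖ := by rw [← Finset.sum_mul]; gcongr; exact hrow i
  · have hr₀ : 0 < p.toReal := zero_lt_one.trans_le hr
    rw [PiLp.norm_eq_sum hr₀, PiLp.norm_eq_sum hr₀, one_div]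
    calc (∑ i, ‖(M *ᵥ v) i‖ ^ p.toReal) ^ p.toReal⁻¹
        ≤ (c ^ p.toReal * ∑ j, ‖v j‖ ^ p.toReal) ^ p.toReal⁻¹ := by
          gcongr
          exact sum_norm_mulVec_rpow_le hr hc hrow hcol v
      _ = c * (∑ j, ‖v j‖ ^ p.toReal) ^ p.toReal⁻¹ := by
          rw [Real.mul_rpow (by positivity) (by positivity), Real.rpow_rpow_inv hc hr₀.ne']

end LpNorm

section OperatorNorm

open scoped Matrix.Norms.L2Operator

variable {𝕜 l m n : Type*} [RCLike 𝕜] [Fintype l] [Fintype m] [Fintype n]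

lemma sum_norm_sq_col_le [DecidableEq n] (X : Matrix m n 𝕜) (j : n) :
    ∑ i, ‖X i j‖ ^ 2 ≤ ‖X‖ ^ 2 := by
  have h := pow_le_pow_left₀ (norm_nonneg _) (l2_opNorm_mulVec X (EuclideanSpace.single j 1)) 2
  rw [PiLp.norm_single, norm_one, mul_one, EuclideanSpace.norm_sq_eq] at h
  simpa using h

lemma sum_norm_sq_row_le [DecidableEq n] (X : Matrix m n 𝕜) (i : m) :
    ∑ j, ‖X i j‖ ^ 2 ≤ ‖X‖ ^ 2 := by
  classical
  simpa [l2_opNorm_conjTranspose] using sum_norm_sq_col_le Xᴴ i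

lemma l2_opNorm_le_of_sum_norm_le [DecidableEq n] {X : Matrix m n 𝕜} {c : ℝ} (hc : 0 ≤ c)
    (hrow : ∀ i, ∑ j, ‖X i j‖ ≤ c) (hcol : ∀ j, ∑ i, ‖X i j‖ ≤ c) : ‖X‖ ≤ c := by
  rw [l2_opNorm_def]
  exact ContinuousLinearMap.opNorm_le_bound _ hc fun v => norm_toLp_mulVec_le hc hrow hcol v

lemma l2_opNorm_le_one_of_isStarProjection [DecidableEq n] {X : Matrix m n 𝕜}
    (h : IsStarProjection (Xᴴ * X)) : ‖X‖ ≤ 1 := by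
  have hX := IsStarProjection.norm_le _ h
  rw [l2_opNorm_conjTranspose_mul_self] at hX
  nlinarith [norm_nonneg X]

lemma l2_opNorm_le_one_of_isometry [DecidableEq n] {X : Matrix m n 𝕜} (hX : Xᴴ * X = 1) :
    ‖X‖ ≤ 1 :=
  l2_opNorm_le_one_of_isStarProjection (hX ▸ IsStarProjection.one _)

lemma isStarProjection_mul_conjTranspose [DecidableEq n] {X : Matrix m n 𝕜} (hX : Xᴴ * X = 1) :
    IsStarProjection (X * Xᴴ) where
  isIdempotentElem := by
    rw [IsIdempotentElem, Matrix.mul_assoc, ← Matrix.mul_assoc Xᴴ, hX, Matrix.one_mul]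
  isSelfAdjoint := isHermitian_mul_conjTranspose_self X

lemma l2_opNorm_one_sub_mul_conjTranspose_le_one [DecidableEq m] [DecidableEq n]
    {X : Matrix m n 𝕜} (hX : Xᴴ * X = 1) : ‖1 - X * Xᴴ‖ ≤ 1 :=
  IsStarProjection.norm_le _ (isStarProjection_mul_conjTranspose hX).one_sub

lemma l2_opNorm_mul_conjTranspose_pow_le [DecidableEq m] [DecidableEq n] (X : Matrix m n 𝕜)
    (q : ℕ) : ‖(X * Xᴴ) ^ q‖ ≤ ‖X‖ ^ (2 * q) := by
  rcases q.eq_zero_or_pos with rfl | hq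
  · simpa using l2_opNorm_le_one_of_isometry (X := (1 : Matrix m m 𝕜)) (by simp)
  · calc ‖(X * Xᴴ) ^ q‖ ≤ ‖X * Xᴴ‖ ^ q := norm_pow_le' _ hq
      _ ≤ (‖X‖ * ‖Xᴴ‖) ^ q := by gcongr; exact l2_opNorm_mul X Xᴴ
      _ = ‖X‖ ^ (2 * q) := by rw [l2_opNorm_conjTranspose, ← sq, pow_mul]

lemma sum_norm_mul_le {e f : m → 𝕜} {a b : ℝ} (ha : 0 ≤ a) (hb : 0 ≤ b)
    (he : ∑ i, ‖e i‖ ^ 2 ≤ a ^ 2) (hf : ∑ i, ‖f i‖ ^ 2 ≤ b ^ 2) : ∑ i, ‖e i * f i‖ ≤ a * b := by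
  simp only [norm_mul]
  refine (Real.sum_mul_le_sqrt_mul_sqrt _ _ _).trans ?_
  gcongr
  · exact Real.sqrt_le_iff.2 ⟨ha, he⟩
  · exact Real.sqrt_le_iff.2 ⟨hb, hf⟩

lemma norm_toLp_diag_mul_diagonal_mul_le [DecidableEq l] [DecidableEq m] (p : ℝ≥0∞)
    [Fact (1 ≤ p)] (E : Matrix l m 𝕜) (s : m → 𝕜) (F : Matrix m l 𝕜) :
    ‖WithLp.toLp p (E * diagonal s * F).diag‖ ≤ ‖E‖ * ‖F‖ * ‖WithLp.toLp p s‖ := by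
  have hdiag : (E * diagonal s * F).diag = (E ⊙ Fᵀ) *ᵥ s := by
    ext i
    simp [Matrix.mul_apply (M := E * diagonal s), mul_diagonal, mulVec, dotProduct, mul_right_comm]
  rw [hdiag]
  exact norm_toLp_mulVec_le (by positivity)
    (fun i => sum_norm_mul_le (norm_nonneg E) (norm_nonneg F) (sum_norm_sq_row_le E i)
      (sum_norm_sq_col_le F i))
    (fun j => sum_norm_mul_le (norm_nonneg E) (norm_nonneg F) (sum_norm_sq_col_le E j)
      (sum_norm_sq_row_le F j)) s

end OperatorNorm

section SingularValue

open scoped Matrix.Norms.L2Operator ComplexOrder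

variable {𝕜 m n : Type*} [RCLike 𝕜] [Fintype m] [Fintype n] [DecidableEq n]

/-- The singular values of `M`, indexed by its columns in the order of the eigenvalues of
`Mᴴ * M`. -/
noncomputable def singularValue (M : Matrix m n 𝕜) (i : n) : ℝ :=
  √((isHermitian_conjTranspose_mul_self M).eigenvalues i)

/-- The unitary matrix of right singular vectors of `M`. -/
noncomputable def rightSingularMatrix (M : Matrix m n 𝕜) : Matrix n n 𝕜 :=
  (isHermitian_conjTranspose_mul_self M).eigenvectorUnitary

/-- The left singular vectors of `M`; the columns belonging to the singular value `0` are `0`, so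
that in general this matrix is only a partial isometry. -/
noncomputable def leftSingularMatrix (M : Matrix m n 𝕜) : Matrix m n 𝕜 :=
  M * rightSingularMatrix M * diagonal fun i => (singularValue M i : 𝕜)⁻¹

variable (M : Matrix m n 𝕜)

lemma singularValue_nonneg (i : n) : 0 ≤ singularValue M i :=
  Real.sqrt_nonneg _

lemma conjTranspose_rightSingularMatrix_mul_self :
    (rightSingularMatrix M)ᴴ * rightSingularMatrix M = 1 :=
  Unitary.coe_star_mul_self _

lemma rightSingularMatrix_mul_conjTranspose_self :
    rightSingularMatrix M * (rightSingularMatrix M)ᴴ = 1 :=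
  Unitary.coe_mul_star_self _

lemma l2_opNorm_rightSingularMatrix_le_one : ‖rightSingularMatrix M‖ ≤ 1 :=
  l2_opNorm_le_one_of_isometry (conjTranspose_rightSingularMatrix_mul_self M)

lemma conjTranspose_mul_rightSingularMatrix_mul_self :
    (M * rightSingularMatrix M)ᴴ * (M * rightSingularMatrix M) =
      diagonal fun i => (singularValue M i : 𝕜) ^ 2 := by
  have h := (isHermitian_conjTranspose_mul_self M).conjStarAlgAut_star_eigenvectorUnitary
  rw [Unitary.conjStarAlgAut_star_apply] at h
  calc (M * rightSingularMatrix M)ᴴ * (M * rightSingularMatrix M)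
      = (rightSingularMatrix M)ᴴ * (Mᴴ * M) * rightSingularMatrix M := by
        simp only [conjTranspose_mul, Matrix.mul_assoc]
    _ = diagonal fun i => (singularValue M i : 𝕜) ^ 2 := by
        refine h.trans (congrArg diagonal (funext fun i => ?_))
        rw [singularValue, ← RCLike.ofReal_pow,
          Real.sq_sqrt (eigenvalues_conjTranspose_mul_self_nonneg M i), Function.comp_apply]

lemma conjTranspose_leftSingularMatrix_mul_mul :
    (leftSingularMatrix M)ᴴ * (M * rightSingularMatrix M) =
      diagonal fun i => (singularValue M i : 𝕜) := by
  rw [leftSingularMatrix, conjTranspose_mul, Matrix.mul_assoc,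
    conjTranspose_mul_rightSingularMatrix_mul_self, diagonal_conjTranspose, diagonal_mul_diagonal]
  refine congrArg diagonal (funext fun i => ?_)
  by_cases h : singularValue M i = 0 <;> simp [h, sq]

lemma l2_opNorm_leftSingularMatrix_le_one : ‖leftSingularMatrix M‖ ≤ 1 := by
  have h : (leftSingularMatrix M)ᴴ * leftSingularMatrix M =
      diagonal fun i => (singularValue M i : 𝕜) * (singularValue M i : 𝕜)⁻¹ := by
    nth_rw 2 [leftSingularMatrix]
    rw [← Matrix.mul_assoc, conjTranspose_leftSingularMatrix_mul_mul, diagonal_mul_diagonal]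
  refine l2_opNorm_le_one_of_isStarProjection ⟨?_, isHermitian_conjTranspose_mul_self _⟩
  rw [IsIdempotentElem, h, diagonal_mul_diagonal]
  refine congrArg diagonal (funext fun i => ?_)
  by_cases hi : singularValue M i = 0 <;> simp [hi]

lemma leftSingularMatrix_mul_diagonal :
    leftSingularMatrix M * diagonal (fun i => (singularValue M i : 𝕜)) =
      M * rightSingularMatrix M := by
  set D : Matrix n n 𝕜 :=
    diagonal fun i => (singularValue M i : 𝕜)⁻¹ * (singularValue M i : 𝕜) - 1 with hD
  have hMD : M * rightSingularMatrix M * D = 0 := by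
    rw [← conjTranspose_mul_self_mul_eq_zero, conjTranspose_mul_rightSingularMatrix_mul_self, hD,
      diagonal_mul_diagonal, ← diagonal_zero]
    refine congrArg diagonal (funext fun i => ?_)
    by_cases hi : singularValue M i = 0 <;> simp [hi]
  have hsub : D = diagonal (fun i => (singularValue M i : 𝕜)⁻¹) *
      diagonal (fun i => (singularValue M i : 𝕜)) - 1 := by
    rw [diagonal_mul_diagonal, ← diagonal_one, diagonal_sub]
  rwa [hsub, Matrix.mul_sub, Matrix.mul_one, ← Matrix.mul_assoc, sub_eq_zero] at hMD

lemma eq_leftSingularMatrix_mul_diagonal_mul :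
    M = leftSingularMatrix M * diagonal (fun i => (singularValue M i : 𝕜)) *
      (rightSingularMatrix M)ᴴ := by
  rw [leftSingularMatrix_mul_diagonal, Matrix.mul_assoc,
    rightSingularMatrix_mul_conjTranspose_self, Matrix.mul_one]

end SingularValue

section SchattenNorm

open scoped Matrix.Norms.L2Operator

variable {𝕜 k l m n : Type*} [RCLike 𝕜] [Fintype k] [Fintype l] [Fintype m] [Fintype n]
  [DecidableEq n] (p : ℝ≥0∞)

/-- The Schatten `p`-norm of a matrix over `ℝ` or `ℂ` with arbitrary finite index types, as the
`ℓ^p` norm of the family of its singular values. -/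
noncomputable def schattenNorm (M : Matrix m n 𝕜) : ℝ :=
  ‖WithLp.toLp p (singularValue M)‖

variable [Fact (1 ≤ p)]

lemma schattenNorm_nonneg (M : Matrix m n 𝕜) : 0 ≤ schattenNorm p M :=
  norm_nonneg _

lemma norm_toLp_diag_mul_mul_le [DecidableEq k] [DecidableEq m] (C : Matrix k m 𝕜)
    (M : Matrix m n 𝕜) (D : Matrix n k 𝕜) :
    ‖WithLp.toLp p (C * M * D).diag‖ ≤ ‖C‖ * ‖D‖ * schattenNorm p M := by
  set s : n → 𝕜 := fun i => (singularValue M i : 𝕜)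
  have hM : C * M * D =
      C * leftSingularMatrix M * diagonal s * ((rightSingularMatrix M)ᴴ * D) := by
    conv_lhs => rw [eq_leftSingularMatrix_mul_diagonal_mul M]
    simp only [s, Matrix.mul_assoc]
  have hs : ‖WithLp.toLp p s‖ = schattenNorm p M :=
    norm_toLp_congr fun i => RCLike.norm_ofReal _
  have hC : ‖C * leftSingularMatrix M‖ ≤ ‖C‖ :=
    (l2_opNorm_mul _ _).trans
      (mul_le_of_le_one_right (norm_nonneg C) (l2_opNorm_leftSingularMatrix_le_one M))
  have hD : ‖(rightSingularMatrix M)ᴴ * D‖ ≤ ‖D‖ := by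
    refine (l2_opNorm_mul _ _).trans (mul_le_of_le_one_left (norm_nonneg D) ?_)
    rw [l2_opNorm_conjTranspose]
    exact l2_opNorm_rightSingularMatrix_le_one M
  have hM₀ := schattenNorm_nonneg p M
  calc ‖WithLp.toLp p (C * M * D).diag‖
      ≤ ‖C * leftSingularMatrix M‖ * ‖(rightSingularMatrix M)ᴴ * D‖ * ‖WithLp.toLp p s‖ :=
        hM ▸ norm_toLp_diag_mul_diagonal_mul_le p _ s _
    _ ≤ ‖C‖ * ‖D‖ * schattenNorm p M := by rw [hs]; gcongr

lemma exists_schattenNorm_eq_norm_toLp_diag [DecidableEq m] (M : Matrix m n 𝕜) :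
    ∃ (C : Matrix n m 𝕜) (D : Matrix n n 𝕜), ‖C‖ ≤ 1 ∧ ‖D‖ ≤ 1 ∧
      schattenNorm p M = ‖WithLp.toLp p (C * M * D).diag‖ := by
  refine ⟨(leftSingularMatrix M)ᴴ, rightSingularMatrix M, ?_,
    l2_opNorm_rightSingularMatrix_le_one M, ?_⟩
  · rw [l2_opNorm_conjTranspose]
    exact l2_opNorm_leftSingularMatrix_le_one M
  · rw [Matrix.mul_assoc, conjTranspose_leftSingularMatrix_mul_mul, diag_diagonal]
    exact norm_toLp_congr fun i => (RCLike.norm_ofReal _).symm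

lemma schattenNorm_add_le (M N : Matrix m n 𝕜) :
    schattenNorm p (M + N) ≤ schattenNorm p M + schattenNorm p N := by
  classical
  obtain ⟨C, D, hC, hD, hMN⟩ := exists_schattenNorm_eq_norm_toLp_diag p (M + N)
  have hCD (X : Matrix m n 𝕜) : ‖WithLp.toLp p (C * X * D).diag‖ ≤ schattenNorm p X :=
    (norm_toLp_diag_mul_mul_le p C X D).trans
      (mul_le_of_le_one_left (schattenNorm_nonneg p X) (mul_le_one₀ hC (norm_nonneg D) hD))
  rw [hMN, Matrix.mul_add, Matrix.add_mul, diag_add, WithLp.toLp_add]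
  exact (norm_add_le _ _).trans (add_le_add (hCD M) (hCD N))

lemma schattenNorm_mul_mul_le [DecidableEq k] [DecidableEq m] (X : Matrix l m 𝕜)
    (M : Matrix m n 𝕜) (Z : Matrix n k 𝕜) :
    schattenNorm p (X * M * Z) ≤ ‖X‖ * ‖Z‖ * schattenNorm p M := by
  classical
  obtain ⟨C, D, hC, hD, hXMZ⟩ := exists_schattenNorm_eq_norm_toLp_diag p (X * M * Z)
  have hM := schattenNorm_nonneg p M
  calc schattenNorm p (X * M * Z) = ‖WithLp.toLp p (C * X * M * (Z * D)).diag‖ := by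
        rw [hXMZ]; simp only [Matrix.mul_assoc]
    _ ≤ ‖C * X‖ * ‖Z * D‖ * schattenNorm p M := norm_toLp_diag_mul_mul_le p _ M _
    _ ≤ ‖X‖ * ‖Z‖ * schattenNorm p M := by
        gcongr
        · exact (l2_opNorm_mul C X).trans (mul_le_of_le_one_left (norm_nonneg X) hC)
        · exact (l2_opNorm_mul Z D).trans (mul_le_of_le_one_right (norm_nonneg Z) hD)

end SchattenNorm

section BlockMatrix

variable {R m m' n n' r : Type*} [Semiring R] [StarRing R]

lemma fromCols_mul_fromBlocks_diagonal_mul_conjTranspose [Fintype m'] [Fintype n'] [Fintype r]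
    (U₁ : Matrix m r R) (U₂ : Matrix m m' R) (L : Matrix r r R) (S : Matrix m' n' R)
    (V₁ : Matrix n r R) (V₂ : Matrix n n' R) :
    fromCols U₁ U₂ * fromBlocks L 0 0 S * (fromCols V₁ V₂)ᴴ = U₁ * L * V₁ᴴ + U₂ * S * V₂ᴴ := by
  simp [conjTranspose_fromCols_eq_fromRows_conjTranspose, fromCols_mul_fromBlocks,
    fromCols_mul_fromRows]

lemma conjTranspose_fromCols_mul_self_eq_one_iff [Fintype m] [DecidableEq r]
    [DecidableEq m'] {U₁ : Matrix m r R} {U₂ : Matrix m m' R} :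
    (fromCols U₁ U₂)ᴴ * fromCols U₁ U₂ = 1 ↔
      U₁ᴴ * U₁ = 1 ∧ U₁ᴴ * U₂ = 0 ∧ U₂ᴴ * U₁ = 0 ∧ U₂ᴴ * U₂ = 1 := by
  rw [conjTranspose_fromCols_eq_fromRows_conjTranspose, fromRows_mul_fromCols, ← fromBlocks_one,
    fromBlocks_inj]

variable [Fintype m] [Fintype m'] [Fintype n'] [Fintype r]

lemma mul_conjTranspose_pow_mul_of_isometry [Fintype n] [DecidableEq m] [DecidableEq m']
    [DecidableEq n'] {U : Matrix m m' R} {V : Matrix n n' R} (hU : Uᴴ * U = 1) (hV : Vᴴ * V = 1)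
    (D : Matrix m' n' R) (q : ℕ) :
    (U * D * Vᴴ * (U * D * Vᴴ)ᴴ) ^ q * (U * D * Vᴴ) = U * ((D * Dᴴ) ^ q * D) * Vᴴ := by
  have hAA : U * D * Vᴴ * (U * D * Vᴴ)ᴴ = U * (D * Dᴴ) * Uᴴ := by
    calc U * D * Vᴴ * (U * D * Vᴴ)ᴴ = U * D * (Vᴴ * V) * (Dᴴ * Uᴴ) := by
          simp only [conjTranspose_mul, conjTranspose_conjTranspose, Matrix.mul_assoc]
      _ = U * (D * Dᴴ) * Uᴴ := by rw [hV, Matrix.mul_one]; simp only [Matrix.mul_assoc]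
  rw [hAA]
  induction q with
  | zero => simp
  | succ q ih =>
    calc (U * (D * Dᴴ) * Uᴴ) ^ (q + 1) * (U * D * Vᴴ)
        = U * (D * Dᴴ) * (Uᴴ * U) * ((D * Dᴴ) ^ q * D * Vᴴ) := by
          rw [pow_succ', Matrix.mul_assoc, ih]
          simp only [Matrix.mul_assoc]
      _ = U * ((D * Dᴴ) ^ (q + 1) * D) * Vᴴ := by
          rw [hU, Matrix.mul_one, pow_succ']
          simp only [Matrix.mul_assoc]

lemma fromBlocks_diagonal_mul_conjTranspose_pow_mul [DecidableEq r] [DecidableEq m']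
    (L : Matrix r r R) (S : Matrix m' n' R) (q : ℕ) :
    (fromBlocks L 0 0 S * (fromBlocks L 0 0 S)ᴴ) ^ q * fromBlocks L 0 0 S =
      fromBlocks ((L * Lᴴ) ^ q * L) 0 0 ((S * Sᴴ) ^ q * S) := by
  simp [fromBlocks_conjTranspose, fromBlocks_multiply, fromBlocks_diagonal_pow]

end BlockMatrix

section RangeComplement

lemma one_sub_mul_conjTranspose_mul_mul {R m n r : Type*} [Ring R] [StarRing R] [Fintype m]
    [Fintype r] [DecidableEq m] [DecidableEq r] {Q : Matrix m r R} (hQ : Qᴴ * Q = 1)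
    (X : Matrix r n R) : (1 - Q * Qᴴ) * (Q * X) = 0 := by
  rw [← Matrix.mul_assoc, Matrix.sub_mul, Matrix.mul_assoc Q, hQ, Matrix.one_mul, Matrix.mul_one,
    sub_self, Matrix.zero_mul]

variable {R l m m' n n' r : Type*} [CommRing R] [StarRing R] [Fintype l] [Fintype m] [Fintype m']
  [Fintype n] [Fintype n'] [Fintype r]

lemma mul_conjTranspose_pow_mul_mul_pow_of_mul_eq_one [DecidableEq r]
    {L K : Matrix r r R} (hLK : L * K = 1) (q : ℕ) :
    (L * Lᴴ) ^ q * L * (K * Kᴴ) ^ q = L := by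
  have hinv : Lᴴ * L * (K * Kᴴ) = 1 := by
    rw [Matrix.mul_assoc, ← Matrix.mul_assoc L, hLK, Matrix.one_mul, ← conjTranspose_mul,
      mul_eq_one_comm.1 hLK, conjTranspose_one]
  rw [mul_pow_mul, Matrix.mul_assoc, pow_mul_pow_eq_one q hinv, Matrix.mul_one]

lemma mul_leading_eq_neg_of_mul_pow_mul_eq_zero [DecidableEq m] [DecidableEq m'] [DecidableEq n']
    [DecidableEq r]
    {U₁ : Matrix m r R} {U₂ : Matrix m m' R} {V₁ : Matrix n r R} {V₂ : Matrix n n' R}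
    {A : Matrix m n R} {L K : Matrix r r R} {S : Matrix m' n' R}
    (hU : (fromCols U₁ U₂)ᴴ * fromCols U₁ U₂ = 1) (hV : (fromCols V₁ V₂)ᴴ * fromCols V₁ V₂ = 1)
    (hA : A = fromCols U₁ U₂ * fromBlocks L 0 0 S * (fromCols V₁ V₂)ᴴ) (hLK : L * K = 1)
    {q : ℕ} {Ω : Matrix n l R} {G : Matrix l r R} (hG : V₁ᴴ * Ω * G = 1)
    {P : Matrix m m R} (hP : P * ((A * Aᴴ) ^ q * A * Ω) = 0) :
    P * U₁ * L = -(P * U₂ * (S * Sᴴ) ^ q * (S * (V₂ᴴ * Ω * G)) * (K * Kᴴ) ^ q) := by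
  have hpow : (A * Aᴴ) ^ q * A =
      U₁ * ((L * Lᴴ) ^ q * L) * V₁ᴴ + U₂ * ((S * Sᴴ) ^ q * S) * V₂ᴴ := by
    rw [hA, mul_conjTranspose_pow_mul_of_isometry hU hV,
      fromBlocks_diagonal_mul_conjTranspose_pow_mul,
      fromCols_mul_fromBlocks_diagonal_mul_conjTranspose]
  rw [eq_neg_iff_add_eq_zero]
  calc P * U₁ * L + P * U₂ * (S * Sᴴ) ^ q * (S * (V₂ᴴ * Ω * G)) * (K * Kᴴ) ^ q
      = P * U₁ * ((L * Lᴴ) ^ q * L * (K * Kᴴ) ^ q) +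
          P * U₂ * (S * Sᴴ) ^ q * (S * (V₂ᴴ * Ω * G)) * (K * Kᴴ) ^ q := by
        rw [mul_conjTranspose_pow_mul_mul_pow_of_mul_eq_one hLK]
    _ = P * U₁ * ((L * Lᴴ) ^ q * L) * (V₁ᴴ * Ω * G) * (K * Kᴴ) ^ q +
          P * U₂ * (S * Sᴴ) ^ q * (S * (V₂ᴴ * Ω * G)) * (K * Kᴴ) ^ q := by
        rw [hG, Matrix.mul_one]
        simp only [Matrix.mul_assoc]
    _ = P * ((A * Aᴴ) ^ q * A * Ω) * G * (K * Kᴴ) ^ q := by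
        rw [hpow]
        simp only [Matrix.mul_add, Matrix.add_mul, Matrix.mul_assoc]
    _ = 0 := by rw [hP, Matrix.zero_mul, Matrix.zero_mul]

end RangeComplement

section SubspaceIteration

open scoped Matrix.Norms.L2Operator

variable {𝕜 l m m' n n' r : Type*} [RCLike 𝕜] [Fintype l] [Fintype m] [Fintype m'] [Fintype n]
  [Fintype n'] [Fintype r]

theorem schattenNorm_mul_le_of_mul_pow_mul_eq_zero
    [DecidableEq m] [DecidableEq m'] [DecidableEq n] [DecidableEq n'] [DecidableEq r]
    {U₁ : Matrix m r 𝕜} {U₂ : Matrix m m' 𝕜} {V₁ : Matrix n r 𝕜} {V₂ : Matrix n n' 𝕜}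
    {A : Matrix m n 𝕜} {L K : Matrix r r 𝕜} {S : Matrix m' n' 𝕜}
    (hU : (fromCols U₁ U₂)ᴴ * fromCols U₁ U₂ = 1) (hV : (fromCols V₁ V₂)ᴴ * fromCols V₁ V₂ = 1)
    (hA : A = fromCols U₁ U₂ * fromBlocks L 0 0 S * (fromCols V₁ V₂)ᴴ) (hLK : L * K = 1)
    {q : ℕ} {Ω : Matrix n l 𝕜} {G : Matrix l r 𝕜} (hG : V₁ᴴ * Ω * G = 1)
    {P : Matrix m m 𝕜} (hP₁ : ‖P‖ ≤ 1) (hP : P * ((A * Aᴴ) ^ q * A * Ω) = 0)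
    (p : ℝ≥0∞) [Fact (1 ≤ p)] :
    schattenNorm p (P * A) ≤
      schattenNorm p S + (‖S‖ * ‖K‖) ^ (2 * q) * schattenNorm p (S * (V₂ᴴ * Ω * G)) := by
  obtain ⟨-, -, -, hU₂⟩ := conjTranspose_fromCols_mul_self_eq_one_iff.1 hU
  obtain ⟨hV₁, -, -, hV₂⟩ := conjTranspose_fromCols_mul_self_eq_one_iff.1 hV
  have hPU₂ : ‖P * U₂‖ ≤ 1 :=
    (l2_opNorm_mul P U₂).trans
      (mul_le_one₀ hP₁ (norm_nonneg U₂) (l2_opNorm_le_one_of_isometry hU₂))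
  have hV₁' : ‖V₁ᴴ‖ ≤ 1 := by
    rw [l2_opNorm_conjTranspose]
    exact l2_opNorm_le_one_of_isometry hV₁
  have hV₂' : ‖V₂ᴴ‖ ≤ 1 := by
    rw [l2_opNorm_conjTranspose]
    exact l2_opNorm_le_one_of_isometry hV₂
  have hPA : P * A = P * U₂ * S * V₂ᴴ +
      -(P * U₂ * (S * Sᴴ) ^ q) * (S * (V₂ᴴ * Ω * G)) * ((K * Kᴴ) ^ q * V₁ᴴ) := by
    calc P * A = P * U₂ * S * V₂ᴴ + P * U₁ * L * V₁ᴴ := by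
          rw [hA, fromCols_mul_fromBlocks_diagonal_mul_conjTranspose, add_comm]
          simp only [Matrix.mul_add, Matrix.mul_assoc]
      _ = _ := by
          rw [mul_leading_eq_neg_of_mul_pow_mul_eq_zero hU hV hA hLK hG hP]
          simp only [Matrix.mul_assoc, Matrix.neg_mul]
  have htail : schattenNorm p (P * U₂ * S * V₂ᴴ) ≤ schattenNorm p S :=
    (schattenNorm_mul_mul_le p _ S _).trans
      (mul_le_of_le_one_left (schattenNorm_nonneg p S) (mul_le_one₀ hPU₂ (norm_nonneg _) hV₂'))
  have hleft : ‖-(P * U₂ * (S * Sᴴ) ^ q)‖ ≤ ‖S‖ ^ (2 * q) := by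
    rw [norm_neg]
    exact ((l2_opNorm_mul _ _).trans (mul_le_of_le_one_left (norm_nonneg _) hPU₂)).trans
      (l2_opNorm_mul_conjTranspose_pow_le S q)
  have hright : ‖(K * Kᴴ) ^ q * V₁ᴴ‖ ≤ ‖K‖ ^ (2 * q) :=
    ((l2_opNorm_mul _ _).trans (mul_le_of_le_one_right (norm_nonneg _) hV₁')).trans
      (l2_opNorm_mul_conjTranspose_pow_le K q)
  rw [hPA, mul_pow]
  refine (schattenNorm_add_le p _ _).trans (add_le_add htail ?_)
  have hnonneg := schattenNorm_nonneg p (S * (V₂ᴴ * Ω * G))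
  exact (schattenNorm_mul_mul_le p _ _ _).trans (by gcongr)

end SubspaceIteration

section LowRankApproximation

open scoped Matrix.Norms.L2Operator ComplexOrder

variable {k a b m n : ℕ}

lemma sval_eq_getD_insertionSort (M : Matrix (Fin m) (Fin n) ℂ) (j : ℕ) :
    sval M j = ((List.ofFn (singularValue M)).insertionSort (· ≥ ·)).getD j 0 := by
  rw [sval, List.map_ofFn]
  rfl

lemma sum_comp_sval (M : Matrix (Fin m) (Fin n) ℂ) (f : ℝ → ℝ) :
    ∑ j ∈ Finset.range n, f (sval M j) = ∑ i, f (singularValue M i) := by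
  have h := sum_range_getD_insertionSort (List.ofFn (singularValue M)) 0 f
  rw [List.length_ofFn, List.map_ofFn, List.sum_ofFn] at h
  simpa only [sval_eq_getD_insertionSort, Function.comp_apply] using h

lemma sval_zero_eq_iSup (M : Matrix (Fin m) (Fin n) ℂ) : sval M 0 = ⨆ i, singularValue M i := by
  rw [sval_eq_getD_insertionSort]
  rcases n.eq_zero_or_pos with rfl | hn
  · simp
  · have hne : List.ofFn (singularValue M) ≠ [] := by simpa using hn.ne'
    have h := (isGreatest_getD_zero_insertionSort hne 0).csSup_eq
    simp only [List.mem_ofFn] at h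
    exact h.symm

lemma schatten_eq_schattenNorm (p : ℝ≥0∞) [hp : Fact (1 ≤ p)] (M : Matrix (Fin m) (Fin n) ℂ) :
    schatten p M = schattenNorm p M := by
  have habs (i : Fin n) : ‖singularValue M i‖ = singularValue M i :=
    Real.norm_of_nonneg (singularValue_nonneg M i)
  rw [schatten, schattenNorm]
  split_ifs with h
  · subst h
    simp only [PiLp.norm_eq_ciSup, habs, sval_zero_eq_iSup]
  · have hpos : 0 < p.toReal := ENNReal.toReal_pos (zero_lt_one.trans_le hp.out).ne' h
    rw [PiLp.norm_eq_sum hpos, sum_comp_sval M (· ^ p.toReal)]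
    simp only [habs]

lemma mul_rpinv_of_rank_eq {M : Matrix (Fin a) (Fin b) ℂ} (h : M.rank = a) :
    M * rpinv M = 1 := by
  have hrange : LinearMap.range (M * Mᴴ).mulVecLin = ⊤ := by
    apply Submodule.eq_top_of_finrank_eq
    rw [← Matrix.rank, rank_self_mul_conjTranspose, h, Module.finrank_fin_fun]
  have hunit : IsUnit (M * Mᴴ) :=
    mulVec_surjective_iff_isUnit.1 (LinearMap.range_eq_top.1 hrange)
  rw [rpinv, ← Matrix.mul_assoc, mul_nonsing_inv _ ((isUnit_iff_isUnit_det _).1 hunit)]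

lemma submatrix_finSumFinEquiv_eq_fromCols (M : Matrix (Fin m) (Fin (a + b)) ℂ) :
    M.submatrix id finSumFinEquiv = fromCols (colsL M) (colsR M) := by
  ext i (j | j) <;> rfl

lemma conjTranspose_fromCols_colsL_colsR_mul_self {U : Matrix (Fin m) (Fin (a + b)) ℂ}
    (hU : Uᴴ * U = 1) :
    (fromCols (colsL U) (colsR U))ᴴ * fromCols (colsL U) (colsR U) = 1 := by
  rw [← submatrix_finSumFinEquiv_eq_fromCols, conjTranspose_submatrix,
    ← submatrix_mul _ _ _ id _ Function.bijective_id, hU, submatrix_one_equiv]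

lemma diagRect_submatrix_finSumFinEquiv (σ : ℕ → ℝ) (k a b : ℕ) :
    (diagRect σ 0 (k + a) (k + b)).submatrix finSumFinEquiv finSumFinEquiv =
      fromBlocks (diagonal fun i : Fin k => (σ i : ℂ)) 0 0 (diagRect σ k a b) := by
  ext (i | i) (j | j)
  · simp [diagRect, diagonal_apply, Fin.ext_iff]
  · have hij : (i : ℕ) ≠ k + j := by lia
    simp [diagRect, hij]
  · have hij : k + (i : ℕ) ≠ j := by lia
    simp [diagRect, hij]
  · simp [diagRect]

lemma mul_diagRect_mul_conjTranspose_eq_fromCols (σ : ℕ → ℝ)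
    (U : Matrix (Fin m) (Fin (k + a)) ℂ) (V : Matrix (Fin n) (Fin (k + b)) ℂ) :
    U * diagRect σ 0 (k + a) (k + b) * Vᴴ =
      fromCols (colsL U) (colsR U) *
        fromBlocks (diagonal fun i : Fin k => (σ i : ℂ)) 0 0 (diagRect σ k a b) *
        (fromCols (colsL V) (colsR V))ᴴ := by
  simp only [← submatrix_finSumFinEquiv_eq_fromCols, ← diagRect_submatrix_finSumFinEquiv,
    conjTranspose_submatrix, submatrix_mul_equiv, submatrix_id_id]

lemma sum_fin_ite_val_eq_le {c : ℝ} (hc : 0 ≤ c) (i n : ℕ) :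
    ∑ j : Fin n, (if i = j then c else 0) ≤ c := by
  rw [Fin.sum_univ_eq_sum_range (fun j => if i = j then c else 0) n, Finset.sum_ite_eq]
  split_ifs
  exacts [le_rfl, hc]

lemma l2_opNorm_diagRect_le {σ : ℕ → ℝ} (hσ₀ : ∀ i, 0 ≤ σ i) (hσ : Antitone σ) (k a b : ℕ) :
    ‖diagRect σ k a b‖ ≤ σ k := by
  have hentry (i : Fin a) (j : Fin b) :
      ‖diagRect σ k a b i j‖ ≤ if (i : ℕ) = j then σ k else 0 := by
    rw [diagRect, of_apply]
    split_ifs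
    · simpa [abs_of_nonneg (hσ₀ _)] using hσ (Nat.le_add_right k i)
    · simp
  refine l2_opNorm_le_of_sum_norm_le (hσ₀ k) (fun i => ?_) (fun j => ?_)
  · exact (Finset.sum_le_sum fun j _ => hentry i j).trans (sum_fin_ite_val_eq_le (hσ₀ k) i b)
  · refine (Finset.sum_le_sum fun i _ => hentry i j).trans ?_
    simpa only [eq_comm] using sum_fin_ite_val_eq_le (hσ₀ k) j a

lemma l2_opNorm_diagonal_inv_le {σ : ℕ → ℝ} (hσ : Antitone σ) (hpos : 0 < σ (k - 1)) :
    ‖(diagonal fun i : Fin k => (σ i : ℂ)⁻¹ : Matrix (Fin k) (Fin k) ℂ)‖ ≤ (σ (k - 1))⁻¹ := by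
  rw [l2_opNorm_diagonal, pi_norm_le_iff_of_nonneg (by positivity)]
  intro i
  have hi : σ (k - 1) ≤ σ i := hσ (Nat.le_sub_one_of_lt i.is_lt)
  rw [norm_inv, Complex.norm_of_nonneg (hpos.le.trans hi)]
  gcongr

lemma l2_opNorm_diagRect_mul_l2_opNorm_diagonal_inv_le {σ : ℕ → ℝ} (hσ₀ : ∀ i, 0 ≤ σ i)
    (hσ : Antitone σ) (hpos : 0 < σ (k - 1)) (a b : ℕ) :
    ‖diagRect σ k a b‖ * ‖(diagonal fun i : Fin k => (σ i : ℂ)⁻¹ : Matrix (Fin k) (Fin k) ℂ)‖ ≤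
      σ k / σ (k - 1) :=
  mul_le_mul (l2_opNorm_diagRect_le hσ₀ hσ k a b) (l2_opNorm_diagonal_inv_le hσ hpos)
    (norm_nonneg _) (hσ₀ k)

lemma diagonal_mul_diagonal_inv {σ : ℕ → ℝ} (hσ : Antitone σ) (hpos : 0 < σ (k - 1)) :
    (diagonal fun i : Fin k => (σ i : ℂ)) * (diagonal fun i : Fin k => (σ i : ℂ)⁻¹) = 1 := by
  have hσ_ne (i : Fin k) : (σ i : ℂ) ≠ 0 :=
    Complex.ofReal_ne_zero.2 (hpos.trans_le (hσ (Nat.le_sub_one_of_lt i.is_lt))).ne'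
  simp [diagonal_mul_diagonal, hσ_ne]

end LowRankApproximation

open scoped Matrix.Norms.L2Operator in
theorem lowrank_error_schatten_general {k m₂ n₂ m n ℓ r : ℕ} (q : ℕ)
    (A : Matrix (Fin m) (Fin n) ℂ) (U : Matrix (Fin m) (Fin (k + m₂)) ℂ)
    (V : Matrix (Fin n) (Fin (k + n₂)) ℂ) (σ : ℕ → ℝ) (hU : Uᴴ * U = 1) (hV : Vᴴ * V = 1)
    (hσ₀ : ∀ i, 0 ≤ σ i) (hσ : Antitone σ) (hA : A = U * diagRect σ 0 (k + m₂) (k + n₂) * Vᴴ)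
    (hrank : 0 < σ (k - 1)) (Ω : Matrix (Fin n) (Fin ℓ) ℂ) (hΩ : ((colsL V)ᴴ * Ω).rank = k)
    (Q : Matrix (Fin m) (Fin r) ℂ) (R : Matrix (Fin r) (Fin ℓ) ℂ) (hQ : Qᴴ * Q = 1)
    (hQR : (A * Aᴴ) ^ q * A * Ω = Q * R) (p : ℝ≥0∞) (hp : 1 ≤ p) :
    schatten p ((1 - Q * Qᴴ) * A) ≤
      schatten p (diagRect σ k m₂ n₂) + (σ k / σ (k - 1)) ^ (2 * q) *
        schatten p (diagRect σ k m₂ n₂ * ((colsR V)ᴴ * Ω * rpinv ((colsL V)ᴴ * Ω))) := by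
  have : Fact (1 ≤ p) := ⟨hp⟩
  have hPY : (1 - Q * Qᴴ) * ((A * Aᴴ) ^ q * A * Ω) = 0 :=
    hQR ▸ one_sub_mul_conjTranspose_mul_mul hQ R
  have hbound := schattenNorm_mul_le_of_mul_pow_mul_eq_zero
    (conjTranspose_fromCols_colsL_colsR_mul_self hU)
    (conjTranspose_fromCols_colsL_colsR_mul_self hV)
    (hA.trans (mul_diagRect_mul_conjTranspose_eq_fromCols σ U V))
    (diagonal_mul_diagonal_inv hσ hrank) (mul_rpinv_of_rank_eq hΩ)
    (l2_opNorm_one_sub_mul_conjTranspose_le_one hQ) hPY p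
  have hγ := l2_opNorm_diagRect_mul_l2_opNorm_diagonal_inv_le hσ₀ hσ hrank m₂ n₂
  simp only [schatten_eq_schattenNorm]
  refine hbound.trans ?_
  gcongr
  exact schattenNorm_nonneg p _

/-- Theorem 4.1, bound (4.1): low-rank approximation error in the Schatten-p norm. -/
theorem lowrank_error_schatten
    {k m₂ n₂ ρ : ℕ} (q : ℕ) (hk : 1 ≤ k)
    (A : Matrix (Fin (k + m₂)) (Fin (k + n₂)) ℂ)
    (U : Matrix (Fin (k + m₂)) (Fin (k + m₂)) ℂ)
    (V : Matrix (Fin (k + n₂)) (Fin (k + n₂)) ℂ)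
    (σ : ℕ → ℝ)
    (hU : Uᴴ * U = 1) (hU' : U * Uᴴ = 1)
    (hV : Vᴴ * V = 1) (hV' : V * Vᴴ = 1)
    (hσ0 : ∀ i, 0 ≤ σ i) (hσm : ∀ i j, i ≤ j → σ j ≤ σ i)
    (hA : A = U * diagRect σ 0 (k + m₂) (k + n₂) * Vᴴ)
    (hrank : 0 < σ (k - 1)) (hgap : σ k < σ (k - 1))
    (Ω : Matrix (Fin (k + n₂)) (Fin (k + ρ)) ℂ)
    (hΩ : ((colsL V)ᴴ * Ω).rank = k)
    (Q : Matrix (Fin (k + m₂)) (Fin (k + ρ)) ℂ)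
    (R : Matrix (Fin (k + ρ)) (Fin (k + ρ)) ℂ)
    (hQ : Qᴴ * Q = 1) (hR : R.BlockTriangular id)
    (hQR : (A * Aᴴ) ^ q * A * Ω = Q * R)
    :
    ∀ p : ℝ≥0∞, 1 ≤ p →
      schatten p ((1 - Q * Qᴴ) * A) ≤
        schatten p (diagRect σ k m₂ n₂) + (σ k / σ (k - 1)) ^ (2 * q) * schatten p (diagRect σ k m₂ n₂ * ((colsR V)ᴴ * Ω * rpinv ((colsL V)ᴴ * Ω))) := by
  exact lowrank_error_schatten_general q A U V σ hU hV hσ0 (fun _ _ h => hσm _ _ h) hA hrank Ω hΩ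
    Q R hQ hQR
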